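/- Let G be a bipartite simple graph on n vertices with domination number γ, where 2 ≤ γ ≤ n−1. Then the signless Laplacian spectral radius of G satisfies q(G) ≤ n − γ + 2; equivalently, every eigenvalue of the signless Laplacian matrix Q(G) is at most n − γ + 2. -/

import Mathlib

/-!
Since `(Q x) v = ∑_{w ∼ v} (x v + x w)`, an eigenvalue `q` of `Q` acts on the edge sums
`x u + x v` of an eigenvector by `q (x u + x v) = ∑_{w ∼ u} (x u + x w) + ∑_{w ∼ v} (x v + x w)`.
If `q ≠ 0`, the edge sums do not all vanish, and an edge where `|x u + x v|` is maximal gives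
`|q| ≤ deg u + deg v`. Without triangles, `u` and `v` have disjoint neighborhoods; all vertices of
these other than `u` and `v` can be left out of a dominating set that contains `u` and `v`, so
`γ ≤ n - (deg u + deg v - 2)`.
-/

open SimpleGraph Matrix

/-- `S` is a dominating set of `G`: every vertex outside `S` has a neighbor in `S`. -/
def IsDominatingSet {V : Type*} (G : SimpleGraph V) (S : Set V) : Prop :=
  ∀ v : V, v ∉ S → ∃ u ∈ S, G.Adj u v

/-- The domination number of a finite graph: the minimum cardinality of a dominating set. -/
noncomputable def dominationNumber {V : Type*} [Fintype V] (G : SimpleGraph V) : ℕ :=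
  sInf {k : ℕ | ∃ S : Finset V, S.card = k ∧ IsDominatingSet G (S : Set V)}

/-- The signless Laplacian matrix `D(G) + A(G)` of a simple graph. -/
def signlessLapMatrix {V : Type*} [Fintype V] [DecidableEq V]
    (G : SimpleGraph V) [DecidableRel G.Adj] : Matrix V V ℝ :=
  G.degMatrix ℝ + G.adjMatrix ℝ

section Domination

variable {V : Type*} (G : SimpleGraph V)

theorem isDominatingSet_compl_biUnion_neighborSet_diff (S : Set V) :
    IsDominatingSet G ((⋃ s ∈ S, G.neighborSet s) \ S)ᶜ := by
  intro v hv
  obtain ⟨hvN, -⟩ := not_not.mp hv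
  obtain ⟨s, hs, hsv⟩ := Set.mem_iUnion₂.mp hvN
  exact ⟨s, fun h ↦ h.2 hs, hsv⟩

variable {G}

theorem disjoint_neighborSet_of_cliqueFree_three (hG : G.CliqueFree 3) {u v : V}
    (huv : G.Adj u v) : Disjoint (G.neighborSet u) (G.neighborSet v) := by
  classical
  exact Set.disjoint_left.mpr fun w huw hvw ↦
    hG {u, v, w} (is3Clique_triple_iff.mpr ⟨huv, huw, hvw⟩)

variable [Fintype V]

theorem IsDominatingSet.dominationNumber_le_card {S : Finset V}
    (hS : IsDominatingSet G (S : Set V)) : dominationNumber G ≤ S.card :=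
  Nat.sInf_le ⟨S, rfl, hS⟩

variable (G) in
theorem dominationNumber_le_card_vertices : dominationNumber G ≤ Fintype.card V :=
  IsDominatingSet.dominationNumber_le_card (S := Finset.univ)
    fun v hv ↦ absurd (Finset.mem_coe.mpr (Finset.mem_univ v)) hv

variable [DecidableRel G.Adj]

variable (G) in
theorem dominationNumber_add_card_biUnion_neighborFinset_sdiff_le [DecidableEq V]
    (S : Finset V) :
    dominationNumber G + (S.biUnion (G.neighborFinset ·) \ S).card ≤ Fintype.card V := by
  have hdom : IsDominatingSet G (((S.biUnion (G.neighborFinset ·) \ S)ᶜ : Finset V) : Set V) := by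
    simpa using isDominatingSet_compl_biUnion_neighborSet_diff G (S : Set V)
  have hcard := Finset.card_add_card_compl (S.biUnion (G.neighborFinset ·) \ S)
  have hle := hdom.dominationNumber_le_card
  omega

theorem dominationNumber_add_degree_add_degree_le (hG : G.CliqueFree 3) {u v : V}
    (huv : G.Adj u v) :
    dominationNumber G + (G.degree u + G.degree v) ≤ Fintype.card V + 2 := by
  classical
  have hdisj : Disjoint (G.neighborFinset u) (G.neighborFinset v) := by
    simpa [← Finset.disjoint_coe] using disjoint_neighborSet_of_cliqueFree_three hG huv
  have hunion : (({u, v} : Finset V).biUnion (G.neighborFinset ·)).card =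
      G.degree u + G.degree v := by
    rw [Finset.biUnion_insert, Finset.singleton_biUnion, Finset.card_union_of_disjoint hdisj,
      card_neighborFinset_eq_degree, card_neighborFinset_eq_degree]
  have hsdiff := Finset.le_card_sdiff {u, v} (({u, v} : Finset V).biUnion (G.neighborFinset ·))
  have hpair := Finset.card_le_two (a := u) (b := v)
  have hdom := dominationNumber_add_card_biUnion_neighborFinset_sdiff_le G {u, v}
  omega

end Domination

section SignlessLaplacian

variable {V : Type*} [Fintype V] [DecidableEq V] {G : SimpleGraph V} [DecidableRel G.Adj]

variable (G) in
theorem signlessLapMatrix_mulVec_apply (x : V → ℝ) (v : V) :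
    (signlessLapMatrix G *ᵥ x) v = ∑ w ∈ G.neighborFinset v, (x v + x w) := by
  rw [signlessLapMatrix, add_mulVec, Pi.add_apply, degMatrix_mulVec_apply,
    adjMatrix_mulVec_apply, Finset.sum_add_distrib, Finset.sum_const,
    card_neighborFinset_eq_degree, nsmul_eq_mul]

theorem abs_signlessLapMatrix_mulVec_apply_le {x : V → ℝ} {M : ℝ} {v : V}
    (hM : ∀ w, G.Adj v w → |x v + x w| ≤ M) :
    |(signlessLapMatrix G *ᵥ x) v| ≤ G.degree v * M := by
  rw [signlessLapMatrix_mulVec_apply]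
  calc |∑ w ∈ G.neighborFinset v, (x v + x w)|
      ≤ ∑ w ∈ G.neighborFinset v, |x v + x w| := Finset.abs_sum_le_sum_abs _ _
    _ ≤ (G.neighborFinset v).card • M :=
        Finset.sum_le_card_nsmul _ _ _ fun w hw ↦ hM w ((G.mem_neighborFinset v w).mp hw)
    _ = G.degree v * M := by rw [card_neighborFinset_eq_degree, nsmul_eq_mul]

theorem exists_adj_add_ne_zero_of_signlessLapMatrix_mulVec_ne_zero {x : V → ℝ}
    (hx : signlessLapMatrix G *ᵥ x ≠ 0) : ∃ u v, G.Adj u v ∧ x u + x v ≠ 0 := by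
  obtain ⟨u, hu⟩ := Function.ne_iff.mp hx
  rw [signlessLapMatrix_mulVec_apply] at hu
  obtain ⟨v, hv, huv⟩ := Finset.exists_ne_zero_of_sum_ne_zero hu
  exact ⟨u, v, (G.mem_neighborFinset u v).mp hv, huv⟩

theorem exists_adj_abs_le_degree_add_degree {q : ℝ}
    (hq : Module.End.HasEigenvalue (toLin' (signlessLapMatrix G)) q) (hq0 : q ≠ 0) :
    ∃ u v, G.Adj u v ∧ |q| ≤ G.degree u + G.degree v := by
  obtain ⟨x, hx⟩ := hq.exists_hasEigenvector
  have hQx : signlessLapMatrix G *ᵥ x = q • x := hx.apply_eq_smul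
  obtain ⟨a, b, hab, habx⟩ := exists_adj_add_ne_zero_of_signlessLapMatrix_mulVec_ne_zero
    (hQx ▸ smul_ne_zero hq0 hx.2)
  have : Nonempty G.Dart := ⟨⟨(a, b), hab⟩⟩
  obtain ⟨⟨⟨u, v⟩, huv⟩, hmax⟩ := Finite.exists_max fun e : G.Dart ↦ |x e.fst + x e.snd|
  have hM (s t : V) (hst : G.Adj s t) : |x s + x t| ≤ |x u + x v| := hmax ⟨(s, t), hst⟩
  have hpos : 0 < |x u + x v| := (abs_pos.mpr habx).trans_le (hM a b hab)
  refine ⟨u, v, huv, le_of_mul_le_mul_right ?_ hpos⟩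
  calc |q| * |x u + x v|
      = |(signlessLapMatrix G *ᵥ x) u + (signlessLapMatrix G *ᵥ x) v| := by
        simp only [hQx, Pi.smul_apply, smul_eq_mul, ← mul_add, abs_mul]
    _ ≤ |(signlessLapMatrix G *ᵥ x) u| + |(signlessLapMatrix G *ᵥ x) v| := abs_add_le _ _
    _ ≤ G.degree u * |x u + x v| + G.degree v * |x u + x v| :=
        add_le_add (abs_signlessLapMatrix_mulVec_apply_le (hM u))
          (abs_signlessLapMatrix_mulVec_apply_le (hM v))
    _ = (G.degree u + G.degree v) * |x u + x v| := (add_mul _ _ _).symm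

end SignlessLaplacian

theorem bipartite_signless_laplacian_eigenvalue_le_general
    {V : Type*} [Fintype V] [DecidableEq V] {G : SimpleGraph V} [DecidableRel G.Adj]
    (hG : G.CliqueFree 3) {q : ℝ}
    (hq : Module.End.HasEigenvalue (toLin' (signlessLapMatrix G)) q) :
    q ≤ (Fintype.card V : ℝ) - dominationNumber G + 2 := by
  rcases eq_or_ne q 0 with rfl | hq0
  · have hγ : (dominationNumber G : ℝ) ≤ Fintype.card V :=
      mod_cast dominationNumber_le_card_vertices G
    linarith
  · obtain ⟨u, v, huv, hle⟩ := exists_adj_abs_le_degree_add_degree hq hq0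
    have hdeg : (dominationNumber G : ℝ) + (G.degree u + G.degree v) ≤ Fintype.card V + 2 :=
      mod_cast dominationNumber_add_degree_add_degree_le hG huv
    linarith [le_abs_self q]

theorem bipartite_signless_laplacian_eigenvalue_le
    {V : Type*} [Fintype V] [DecidableEq V] (G : SimpleGraph V) [DecidableRel G.Adj]
    (n γ : ℕ) (hn : Fintype.card V = n) (hγ : dominationNumber G = γ)
    (hγ2 : 2 ≤ γ) (hγn : γ ≤ n - 1) (hbip : G.Colorable 2)
    (q : ℝ) (hq : Module.End.HasEigenvalue (Matrix.toLin' (signlessLapMatrix G)) q) :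
    q ≤ (n : ℝ) - γ + 2 := by
  subst hn hγ
  exact bipartite_signless_laplacian_eigenvalue_le_general (hbip.cliqueFree (by decide)) hq
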